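/- Let D_X > 0 and suppose some channel k* ∈ ℛ_X(D_X;X) attains the minimal induced intermediate distortion D_Y^min = min 𝒟*_Y(D_X;X). Then the minimal achievable rate of distilling the intermediate layer directly is upper-bounded by the input rate-distortion function: R_X(D_Y^min;Y) ≤ R_X(D_X;X). -/

import Mathlib

/-!
An optimal channel for one distortion measure is an admissible competitor in the rate-distortion
problem of any other distortion measure at the level it induces there, so its mutual information,
which is the first rate, bounds the second. For infima in `ℝ` this needs the competing values to be
bounded below; the bound `0` is Gibbs' inequality for the joint distribution and the product of its
marginals.
-/

open scoped BigOperators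

/-- Joint distribution P(a,b) = p(a)·k(a)(b) induced by a source `p` and a channel `k`,
as a real number. -/
noncomputable def jointP {A B : Type*} [Fintype A] [Fintype B] (p : PMF A) (k : A → PMF B)
    (a : A) (b : B) : ℝ :=
  (p a * k a b).toReal

/-- Marginal distribution of the second coordinate of the joint induced by `(p, k)`. -/
noncomputable def margSnd {A B : Type*} [Fintype A] [Fintype B] (p : PMF A) (k : A → PMF B)
    (b : B) : ℝ :=
  ∑ a, jointP p k a b

/-- Mutual information I(A;B) = ∑_{a,b} P(a,b)·log(P(a,b)/(P(a)·P(b))) of the joint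
induced by `(p, k)`; the convention 0·log 0 = 0 holds automatically in Lean. -/
noncomputable def mutualInfo {A B : Type*} [Fintype A] [Fintype B] (p : PMF A)
    (k : A → PMF B) : ℝ :=
  ∑ a, ∑ b, jointP p k a b * Real.log (jointP p k a b / ((p a).toReal * margSnd p k b))

/-- Expected distortion E[d(A,B)] under the joint induced by `(p, k)`. -/
noncomputable def expDist {A B : Type*} [Fintype A] [Fintype B] (p : PMF A) (k : A → PMF B)
    (d : A → B → ℝ) : ℝ :=
  ∑ a, ∑ b, jointP p k a b * d a b

/-- Rate-distortion function: infimum of mutual information over all channels `A → PMF B`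
meeting the expected-distortion constraint `≤ D`. -/
noncomputable def rate {A B : Type*} [Fintype A] [Fintype B] (p : PMF A) (d : A → B → ℝ)
    (D : ℝ) : ℝ :=
  sInf { r : ℝ | ∃ k : A → PMF B, expDist p k d ≤ D ∧ r = mutualInfo p k }

/-- Conditional probability P(A = a | B = b) under the joint induced by `(p, k)`. -/
noncomputable def condProb {A B : Type*} [Fintype A] [Fintype B] (p : PMF A) (k : A → PMF B)
    (a : A) (b : B) : ℝ :=
  jointP p k a b / margSnd p k b

section Gibbs

variable {ι : Type*} {s : Finset ι} {x y : ℝ} {f q : ι → ℝ}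

theorem sub_le_mul_log_div (hx : 0 ≤ x) (hy : 0 ≤ y) (hxy : y = 0 → x = 0) :
    x - y ≤ x * Real.log (x / y) := by
  rcases hy.eq_or_lt with rfl | hy
  · simp [hxy rfl]
  · calc x - y = y * (x / y - 1) := by field_simp
      _ ≤ y * (x / y * Real.log (x / y)) := by
        gcongr
        exact Real.self_sub_one_le_mul_log (div_nonneg hx hy.le)
      _ = x * Real.log (x / y) := by field_simp

theorem sum_sub_sum_le_sum_mul_log_div (hf : ∀ i ∈ s, 0 ≤ f i) (hq : ∀ i ∈ s, 0 ≤ q i)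
    (hfq : ∀ i ∈ s, q i = 0 → f i = 0) :
    ∑ i ∈ s, f i - ∑ i ∈ s, q i ≤ ∑ i ∈ s, f i * Real.log (f i / q i) := by
  rw [← Finset.sum_sub_distrib]
  exact Finset.sum_le_sum fun i hi => sub_le_mul_log_div (hf i hi) (hq i hi) (hfq i hi)

end Gibbs

section Marginals

theorem sum_toReal_pmf {A : Type*} [Fintype A] (p : PMF A) : ∑ a, (p a).toReal = 1 := by
  rw [← ENNReal.toReal_sum fun a _ => p.apply_ne_top a, ← tsum_fintype (L := .unconditional A),
    p.tsum_coe, ENNReal.toReal_one]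

variable {A B : Type*} [Fintype A] [Fintype B] (p : PMF A) (k : A → PMF B)

theorem jointP_nonneg (a : A) (b : B) : 0 ≤ jointP p k a b :=
  ENNReal.toReal_nonneg

theorem jointP_le_margSnd (a : A) (b : B) : jointP p k a b ≤ margSnd p k b :=
  Finset.single_le_sum (fun a _ => jointP_nonneg p k a b) (Finset.mem_univ a)

theorem margSnd_nonneg (b : B) : 0 ≤ margSnd p k b :=
  Finset.sum_nonneg fun a _ => jointP_nonneg p k a b

theorem sum_jointP_right (a : A) : ∑ b, jointP p k a b = (p a).toReal := by
  simp only [jointP, ENNReal.toReal_mul, ← Finset.mul_sum, sum_toReal_pmf, mul_one]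

theorem sum_margSnd : ∑ b, margSnd p k b = 1 := by
  simp only [margSnd]
  rw [Finset.sum_comm]
  simp only [sum_jointP_right, sum_toReal_pmf]

theorem jointP_eq_zero_of_mul_margSnd_eq_zero {a : A} {b : B}
    (h : (p a).toReal * margSnd p k b = 0) : jointP p k a b = 0 := by
  rcases mul_eq_zero.mp h with ha | hb
  · rw [jointP, ENNReal.toReal_mul, ha, zero_mul]
  · exact le_antisymm (hb ▸ jointP_le_margSnd p k a b) (jointP_nonneg p k a b)

end Marginals

section RateDistortion

variable {A B : Type*} [Fintype A] [Fintype B] (p : PMF A)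

theorem mutualInfo_nonneg (k : A → PMF B) : 0 ≤ mutualInfo p k := by
  have gibbs := sum_sub_sum_le_sum_mul_log_div (s := Finset.univ)
    (f := fun ab : A × B => jointP p k ab.1 ab.2)
    (q := fun ab => (p ab.1).toReal * margSnd p k ab.2)
    (fun ab _ => jointP_nonneg p k ab.1 ab.2)
    (fun ab _ => mul_nonneg ENNReal.toReal_nonneg (margSnd_nonneg p k ab.2))
    (fun _ _ => jointP_eq_zero_of_mul_margSnd_eq_zero p k)
  simpa only [mutualInfo, Fintype.sum_prod_type, sum_jointP_right, ← Finset.mul_sum, sum_margSnd,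
    mul_one, sub_self] using gibbs

/-- The channels attaining the rate-distortion function `rate p d D`, written `ℛ_X(D_X;X)` for the
source `X` with distortion `d_X`; the reproduction alphabet may differ from that of the source. -/
def optimalChannels (d : A → B → ℝ) (D : ℝ) : Set (A → PMF B) :=
  {k | expDist p k d ≤ D ∧ mutualInfo p k = rate p d D}

variable {p} {d d' : A → B → ℝ} {D D' : ℝ} {k : A → PMF B}

theorem rate_le_mutualInfo (hk : expDist p k d ≤ D) : rate p d D ≤ mutualInfo p k := by
  refine csInf_le ⟨0, ?_⟩ ⟨k, hk, rfl⟩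
  rintro _ ⟨k', -, rfl⟩
  exact mutualInfo_nonneg p k'

theorem distill_le_input_rd_general (hk : k ∈ optimalChannels p d D)
    (hD' : expDist p k d' ≤ D') : rate p d' D' ≤ rate p d D :=
  calc rate p d' D' ≤ mutualInfo p k := rate_le_mutualInfo hD'
    _ = rate p d D := hk.2

end RateDistortion

/-- If some X-optimal channel k* attains the minimal induced intermediate
distortion D_Y^min = min 𝒟*_Y(D_X;X), then R_X(D_Y^min;Y) ≤ R_X(D_X;X). -/
theorem distill_le_input_rd
    {𝒳 𝒴 : Type*} [Fintype 𝒳] [Fintype 𝒴] [Nonempty 𝒳] [Nonempty 𝒴]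
    (pX : PMF 𝒳) (g : 𝒳 → 𝒴)
    (dX : 𝒳 → 𝒳 → ℝ) (hdX : ∀ x x', 0 ≤ dX x x')
    (dY : 𝒴 → 𝒴 → ℝ) (hdY : ∀ y y', 0 ≤ dY y y')
    (DX : ℝ) (hDX : 0 < DX)
    (kstar : 𝒳 → PMF 𝒳)
    (hk_dist : expDist pX kstar dX ≤ DX)
    (hk_rate : mutualInfo pX kstar = rate pX dX DX)
    (DYmin : ℝ)
    (hattain : DYmin = expDist pX kstar (fun x xhat => dY (g x) (g xhat)))
    (hmin : ∀ k : 𝒳 → PMF 𝒳, expDist pX k dX ≤ DX →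
      mutualInfo pX k = rate pX dX DX →
      DYmin ≤ expDist pX k (fun x xhat => dY (g x) (g xhat))) :
    rate pX (fun x xhat => dY (g x) (g xhat)) DYmin ≤ rate pX dX DX :=
  distill_le_input_rd_general ⟨hk_dist, hk_rate⟩ hattain.ge
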